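/- Let 0 < s < 1. For all n, m ∈ ℕ, ∫_{SU(2)} ∫_{ℝ²} H_n(Q(x+iy, u)) · star(H_m(Q(x+iy, u))) · exp(−(1−s)x² − (1/s − 1)y²) dx dy dω(u) = δ_{nm} · b_n(s) · 1, as an identity in ℍ (the family {H_n(q)} is orthogonal in the quaternionic L²-space). -/

import Mathlib

open Quaternion Matrix MeasureTheory Polynomial Real

/-- The physicists' Hermite polynomials: `H 0 = 1`, `H (n+1) = 2X * H n - (H n)'`. -/
noncomputable def physHermite : ℕ → Polynomial ℝ
  | 0 => 1
  | n + 1 => 2 * Polynomial.X * physHermite n - Polynomial.derivative (physHermite n)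

/-- The normalization constant `b_n(s) = (π√s/(1−s)) (2(1+s)/(1−s))^n n!`. -/
noncomputable def bn (s : ℝ) (n : ℕ) : ℝ :=
  Real.pi * Real.sqrt s / (1 - s) * (2 * (1 + s) / (1 - s)) ^ n * n.factorial

/-- The 2×2 complex matrix `M(z,u) = u · diag(z, conj z) · u*`. -/
noncomputable def repMat (z : ℂ) (u : Matrix.specialUnitaryGroup (Fin 2) ℂ) :
    Matrix (Fin 2) (Fin 2) ℂ :=
  (u : Matrix (Fin 2) (Fin 2) ℂ) * Matrix.diagonal ![z, (starRingEnd ℂ) z] *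
    star (u : Matrix (Fin 2) (Fin 2) ℂ)

/-- The quaternion `Q(z,u)` whose standard 2×2 complex matrix representation is `repMat z u`. -/
noncomputable def quatOf (z : ℂ) (u : Matrix.specialUnitaryGroup (Fin 2) ℂ) : ℍ[ℝ] :=
  ⟨(repMat z u 0 0).re, (repMat z u 1 0).im, (repMat z u 1 0).re, (repMat z u 0 0).im⟩

noncomputable instance : MeasurableSpace (Matrix.specialUnitaryGroup (Fin 2) ℂ) := borel _

/-!
For fixed `u`, the map `z ↦ Q(z, u)` is a star-algebra homomorphism `ℂ → ℍ` over `ℝ`. Since `H_n`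
has real coefficients, the inner double integral is therefore the image of the complex Hermitian
pairing of `H_n` and `H_m` for the weight `exp (-a x² - b y²)`, with `a = 1 - s` and
`b = 1 / s - 1`; it does not depend on `u`.

Integrating by parts in the directions `1` and `I` gives
`2 ⟨z f, g⟩ = (a⁻¹ - b⁻¹) ⟨f', g⟩ + (a⁻¹ + b⁻¹) ⟨f, g'⟩`. The values of `a` and `b` satisfy
`a⁻¹ - b⁻¹ = 1`, so that the raising operator `f ↦ 2 z f - f'` is the adjoint of
`(a⁻¹ + b⁻¹) d/dz`. Orthogonality and the norms follow by induction from `H_{n+1}' = 2(n + 1) H_n`.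
-/

section GaussianIntegrability

lemma integrable_norm_pow_mul_exp_neg_mul_sq {E : Type*} [NormedAddCommGroup E] [NormedSpace ℝ E]
    [FiniteDimensional ℝ E] [Nontrivial E] [MeasurableSpace E] [BorelSpace E] (μ : Measure E)
    [μ.IsAddHaarMeasure] {c : ℝ} (hc : 0 < c) (k : ℕ) :
    Integrable (fun x : E => ‖x‖ ^ k * exp (-c * ‖x‖ ^ 2)) μ := by
  refine (integrable_fun_norm_addHaar μ (f := fun r : ℝ => r ^ k * exp (-c * r ^ 2))).2 ?_
  have hs : (-1 : ℝ) < (Module.finrank ℝ E - 1 + k : ℕ) := by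
    linarith [Nat.cast_nonneg (α := ℝ) (Module.finrank ℝ E - 1 + k)]
  simpa only [rpow_natCast, pow_add, mul_assoc, smul_eq_mul] using
    integrableOn_rpow_mul_exp_neg_mul_sq hc hs

/-- The anisotropic Gaussian weight `exp (-a x² - b y²)` at the point `x + iy`. -/
noncomputable def gaussianWeight (a b : ℝ) (z : ℂ) : ℝ :=
  exp (-a * z.re ^ 2 - b * z.im ^ 2)

lemma continuous_gaussianWeight (a b : ℝ) : Continuous (gaussianWeight a b) := by
  unfold gaussianWeight; fun_prop

lemma gaussianWeight_le_exp_neg_min_mul_norm_sq (a b : ℝ) (z : ℂ) :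
    gaussianWeight a b z ≤ exp (-min a b * ‖z‖ ^ 2) := by
  rw [gaussianWeight, ← Complex.normSq_eq_norm_sq, Complex.normSq_apply]
  gcongr
  nlinarith [min_le_left a b, min_le_right a b, sq_nonneg z.re, sq_nonneg z.im]

/-- The integrand `w(z) f(z) conj (g(z))` of the Hermitian pairing of `f` and `g` in the
`L²`-space of the weight `w = gaussianWeight a b`. -/
noncomputable def gaussianIntegrand (a b : ℝ) (f g : ℝ[X]) (z : ℂ) : ℂ :=
  gaussianWeight a b z • (aeval z f * star (aeval z g))

variable {a b : ℝ}

lemma integrable_gaussianIntegrand_monomial (ha : 0 < a) (hb : 0 < b) (k l : ℕ) (c d : ℝ) :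
    Integrable (gaussianIntegrand a b (monomial k c) (monomial l d)) := by
  have hdom := (integrable_norm_pow_mul_exp_neg_mul_sq (volume : Measure ℂ)
    (lt_min ha hb) (k + l)).const_mul (|c| * |d|)
  refine hdom.mono' ?_ (.of_forall fun z => ?_)
  · exact ((continuous_gaussianWeight a b).smul ((Polynomial.continuous_aeval _).mul
      (Polynomial.continuous_aeval _).star)).aestronglyMeasurable
  · have hw := gaussianWeight_le_exp_neg_min_mul_norm_sq a b z
    have hnorm : ‖gaussianIntegrand a b (monomial k c) (monomial l d) z‖
        = |c| * |d| * (‖z‖ ^ (k + l) * gaussianWeight a b z) := by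
      have : ‖gaussianWeight a b z‖ = gaussianWeight a b z := norm_of_nonneg (exp_nonneg _)
      simp only [gaussianIntegrand, aeval_monomial, norm_smul, norm_mul, _root_.norm_star, norm_pow,
        this, Complex.coe_algebraMap, Complex.norm_real, norm_eq_abs]
      ring
    rw [hnorm]
    gcongr

lemma integrable_gaussianIntegrand (ha : 0 < a) (hb : 0 < b) (f g : ℝ[X]) :
    Integrable (gaussianIntegrand a b f g) := by
  induction f using Polynomial.induction_on' with
  | add f₁ f₂ h₁ h₂ =>
    refine (h₁.add h₂).congr (.of_forall fun z => ?_)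
    simp only [gaussianIntegrand, Pi.add_apply, map_add, add_mul, smul_add]
  | monomial k c =>
    induction g using Polynomial.induction_on' with
    | add g₁ g₂ h₁ h₂ =>
      refine (h₁.add h₂).congr (.of_forall fun z => ?_)
      simp only [gaussianIntegrand, Pi.add_apply, map_add, star_add, mul_add, smul_add]
    | monomial l d => exact integrable_gaussianIntegrand_monomial ha hb k l c d

end GaussianIntegrability

section GaussianPairing

/-- The Hermitian pairing `∫ f(z) conj (g(z)) exp (-a x² - b y²) dx dy` of two real polynomials,
`z = x + iy`. -/
noncomputable def gaussianPairing (a b : ℝ) (f g : ℝ[X]) : ℂ :=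
  ∫ z, gaussianIntegrand a b f g z

variable {a b : ℝ}

lemma star_gaussianPairing (f g : ℝ[X]) :
    star (gaussianPairing a b f g) = gaussianPairing a b g f := by
  unfold gaussianPairing
  rw [Complex.star_def, ← integral_conj]
  congr 1 with z : 1
  simp only [gaussianIntegrand, ← Complex.star_def, StarModule.star_smul, star_mul,
    star_star, star_trivial]

@[simp]
lemma gaussianPairing_zero_right (f : ℝ[X]) : gaussianPairing a b f 0 = 0 := by
  simp [gaussianPairing, gaussianIntegrand]

lemma gaussianPairing_smul_right (c : ℝ) (f g : ℝ[X]) :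
    gaussianPairing a b f (c • g) = c • gaussianPairing a b f g := by
  simp only [gaussianPairing, gaussianIntegrand, map_smul, StarModule.star_smul,
    star_trivial, mul_smul_comm, ← integral_smul, smul_comm c]

lemma gaussianPairing_smul_left (c : ℝ) (f g : ℝ[X]) :
    gaussianPairing a b (c • f) g = c • gaussianPairing a b f g := by
  simp only [gaussianPairing, gaussianIntegrand, map_smul, smul_mul_assoc, ← integral_smul,
    smul_comm c]

lemma gaussianPairing_sub_left (ha : 0 < a) (hb : 0 < b) (f₁ f₂ g : ℝ[X]) :
    gaussianPairing a b (f₁ - f₂) g = gaussianPairing a b f₁ g - gaussianPairing a b f₂ g := by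
  simp only [gaussianPairing]
  rw [← integral_sub (integrable_gaussianIntegrand ha hb _ _)
    (integrable_gaussianIntegrand ha hb _ _)]
  simp only [gaussianIntegrand, map_sub, sub_mul, smul_sub]

lemma hasLineDerivAt_gaussianWeight (a b : ℝ) (z v : ℂ) :
    HasLineDerivAt ℝ (gaussianWeight a b)
      (gaussianWeight a b z * (-(2 * a * z.re * v.re) - 2 * b * z.im * v.im)) z v := by
  have hre : HasLineDerivAt ℝ Complex.re v.re z v := Complex.reCLM.hasFDerivAt.hasLineDerivAt v
  have him : HasLineDerivAt ℝ Complex.im v.im z v := Complex.imCLM.hasFDerivAt.hasLineDerivAt v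
  refine (((hre.fun_pow 2).const_mul (-a)).sub ((him.fun_pow 2).const_mul b)).exp.congr_deriv ?_
  simp only [Pi.sub_apply, zero_smul, add_zero, Nat.cast_ofNat, Nat.add_one_sub_one, pow_one,
    gaussianWeight]
  ring

lemma hasLineDerivAt_aeval_mul_star_aeval (f g : ℝ[X]) (z v : ℂ) :
    HasLineDerivAt ℝ (fun z : ℂ => aeval z f * star (aeval z g))
      (v * (aeval z (derivative f) * star (aeval z g))
        + star v * (aeval z f * star (aeval z (derivative g)))) z v := by
  have haeval (p : ℝ[X]) :
      HasLineDerivAt ℝ (fun z : ℂ => aeval z p) (v * aeval z (derivative p)) z v := by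
    simpa using ((p.hasDerivAt_aeval z).hasFDerivAt.restrictScalars ℝ).hasLineDerivAt v
  refine ((haeval f).mul (haeval g).star).congr_deriv ?_
  simp only [zero_smul, add_zero, star_mul']
  ring

lemma integral_const_mul_add_const_mul {α 𝕜 : Type*} [MeasurableSpace α] {μ : Measure α}
    [RCLike 𝕜] {F G : α → 𝕜} (hF : Integrable F μ) (hG : Integrable G μ) (c d : 𝕜) :
    ∫ x, (c * F x + d * G x) ∂μ = c * (∫ x, F x ∂μ) + d * ∫ x, G x ∂μ := by
  rw [integral_add (hF.const_mul c) (hG.const_mul d), integral_const_mul, integral_const_mul]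

lemma gaussianWeight_smul_lineDeriv (f g : ℝ[X]) (z v : ℂ) :
    gaussianWeight a b z • (v * (aeval z (derivative f) * star (aeval z g))
        + star v * (aeval z f * star (aeval z (derivative g))))
      = v * gaussianIntegrand a b (derivative f) g z
        + star v * gaussianIntegrand a b f (derivative g) z := by
  simp only [gaussianIntegrand, Complex.real_smul]
  ring

lemma lineDeriv_gaussianWeight_smul (f g : ℝ[X]) (z v : ℂ) :
    (gaussianWeight a b z * (-(2 * a * z.re * v.re) - 2 * b * z.im * v.im)) •
        (aeval z f * star (aeval z g))
      = -(a * v.re - b * v.im * Complex.I) * gaussianIntegrand a b (X * f) g z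
        + -(a * v.re + b * v.im * Complex.I) * gaussianIntegrand a b f (X * g) z := by
  have hre : 2 * (z.re : ℂ) = z + star z := by
    simpa using (Complex.add_conj z).symm
  have him : 2 * (z.im : ℂ) = -Complex.I * (z - star z) := by
    rw [Complex.star_def, Complex.sub_conj]
    push_cast
    linear_combination (2 * z.im : ℂ) * Complex.I_sq
  simp only [gaussianIntegrand, Complex.real_smul, map_mul, aeval_X, star_mul]
  push_cast
  linear_combination (-(a * v.re * hre) - b * v.im * him) *
    (gaussianWeight a b z * aeval z f * star (aeval z g))

lemma gaussianPairing_derivative_add_gaussianPairing_derivative (ha : 0 < a) (hb : 0 < b)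
    (f g : ℝ[X]) (v : ℂ) :
    v * gaussianPairing a b (derivative f) g + star v * gaussianPairing a b f (derivative g)
      = (a * v.re - b * v.im * Complex.I) * gaussianPairing a b (X * f) g
        + (a * v.re + b * v.im * Complex.I) * gaussianPairing a b f (X * g) := by
  have hint := integrable_gaussianIntegrand ha hb
  have hparts := integral_bilinear_hasLineDerivAt_right_eq_neg_left_of_integrable
    (μ := (volume : Measure ℂ)) (B := ContinuousLinearMap.lsmul ℝ ℝ) (v := v)
    (f := gaussianWeight a b) (g := fun z => aeval z f * star (aeval z g))
    (by
      simp only [ContinuousLinearMap.lsmul_apply, lineDeriv_gaussianWeight_smul]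
      exact ((hint (X * f) g).const_mul _).add ((hint f (X * g)).const_mul _))
    (by
      simp only [ContinuousLinearMap.lsmul_apply, gaussianWeight_smul_lineDeriv]
      exact ((hint (derivative f) g).const_mul _).add ((hint f (derivative g)).const_mul _))
    (hint f g)
    (fun z _ => hasLineDerivAt_gaussianWeight a b z v)
    (fun z _ => hasLineDerivAt_aeval_mul_star_aeval f g z v)
  simp only [ContinuousLinearMap.lsmul_apply, gaussianWeight_smul_lineDeriv,
    lineDeriv_gaussianWeight_smul] at hparts
  rw [integral_const_mul_add_const_mul (hint _ _) (hint _ _),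
    integral_const_mul_add_const_mul (hint _ _) (hint _ _)] at hparts
  unfold gaussianPairing
  linear_combination hparts

lemma two_mul_gaussianPairing_X_mul_left (ha : 0 < a) (hb : 0 < b) (f g : ℝ[X]) :
    2 * gaussianPairing a b (X * f) g
      = (a⁻¹ - b⁻¹) * gaussianPairing a b (derivative f) g
        + (a⁻¹ + b⁻¹) * gaussianPairing a b f (derivative g) := by
  have hx : gaussianPairing a b (derivative f) g + gaussianPairing a b f (derivative g)
      = a * gaussianPairing a b (X * f) g + a * gaussianPairing a b f (X * g) := by
    simpa using gaussianPairing_derivative_add_gaussianPairing_derivative ha hb f g 1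
  have hy : gaussianPairing a b (derivative f) g - gaussianPairing a b f (derivative g)
      = b * gaussianPairing a b f (X * g) - b * gaussianPairing a b (X * f) g := by
    have h := gaussianPairing_derivative_add_gaussianPairing_derivative ha hb f g Complex.I
    simp only [Complex.star_def, Complex.conj_I, Complex.I_re, Complex.I_im, Complex.ofReal_zero,
      Complex.ofReal_one] at h
    exact mul_left_cancel₀ Complex.I_ne_zero (by linear_combination h)
  have ha' : (a : ℂ) ≠ 0 := by exact_mod_cast ha.ne'
  have hb' : (b : ℂ) ≠ 0 := by exact_mod_cast hb.ne'
  push_cast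
  field_simp
  linear_combination -b * hx + a * hy

lemma integral_complex_eq_integral_integral {E : Type*} [NormedAddCommGroup E] [NormedSpace ℝ E]
    {F : ℂ → E} (hF : Integrable F) :
    ∫ z, F z = ∫ x : ℝ, ∫ y : ℝ, F (x + y * Complex.I) := by
  let e := Complex.measurableEquivRealProd.symm
  have he : MeasurePreserving e := Complex.volume_preserving_equiv_real_prod.symm
  have hp (p : ℝ × ℝ) : e p = p.1 + p.2 * Complex.I := (Complex.re_add_im (e p)).symm
  rw [← he.integral_comp e.measurableEmbedding, Measure.volume_eq_prod,
    integral_prod (fun p => F (e p)) ((he.integrable_comp_emb e.measurableEmbedding).2 hF)]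
  simp only [hp]

lemma gaussianPairing_one_one (ha : 0 < a) (hb : 0 < b) :
    gaussianPairing a b 1 1 = (π / √(a * b) : ℝ) := by
  rw [gaussianPairing,
    integral_complex_eq_integral_integral (integrable_gaussianIntegrand ha hb 1 1)]
  have hsplit (x y : ℝ) : gaussianIntegrand a b 1 1 (x + y * Complex.I)
      = ((exp (-a * x ^ 2) * exp (-b * y ^ 2) : ℝ) : ℂ) := by
    simp [gaussianIntegrand, gaussianWeight, ← exp_add, sub_eq_add_neg]
  simp only [hsplit, integral_complex_ofReal, integral_const_mul, integral_mul_const,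
    integral_gaussian]
  rw [← sqrt_mul (by positivity), div_mul_div_comm, sqrt_div' _ (by positivity),
    sqrt_mul_self pi_pos.le]

end GaussianPairing

section Hermite

lemma physHermite_succ (n : ℕ) :
    physHermite (n + 1) = (2 : ℝ) • (X * physHermite n) - derivative (physHermite n) := by
  rw [physHermite, mul_assoc, ofNat_smul_eq_nsmul, two_nsmul, two_mul]

lemma derivative_physHermite_succ (n : ℕ) :
    derivative (physHermite (n + 1)) = (2 * (n + 1) : ℝ) • physHermite n := by
  induction n with
  | zero => simp [physHermite, two_smul, one_add_one_eq_two]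
  | succ n ih =>
    rw [physHermite_succ (n + 1), derivative_sub, derivative_smul, derivative_mul, ih,
      derivative_smul, derivative_X, one_mul, mul_smul_comm]
    push_cast
    linear_combination (norm := module) (-(2 * (n + 1) : ℝ)) • physHermite_succ n

variable {a b : ℝ}

lemma gaussianPairing_physHermite_succ_left (ha : 0 < a) (hb : 0 < b) (hab : a⁻¹ - b⁻¹ = 1)
    (n : ℕ) (g : ℝ[X]) :
    gaussianPairing a b (physHermite (n + 1)) g
      = (a⁻¹ + b⁻¹) * gaussianPairing a b (physHermite n) (derivative g) := by
  have hX := two_mul_gaussianPairing_X_mul_left ha hb (physHermite n) g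
  have hab' : (a⁻¹ - b⁻¹ : ℂ) = 1 := by exact_mod_cast hab
  rw [hab', one_mul] at hX
  rw [physHermite_succ, gaussianPairing_sub_left ha hb, gaussianPairing_smul_left,
    Complex.real_smul, Complex.ofReal_ofNat, hX, add_sub_cancel_left]

lemma gaussianPairing_physHermite_succ_zero (ha : 0 < a) (hb : 0 < b) (hab : a⁻¹ - b⁻¹ = 1)
    (n : ℕ) : gaussianPairing a b (physHermite (n + 1)) (physHermite 0) = 0 := by
  rw [gaussianPairing_physHermite_succ_left ha hb hab, physHermite, derivative_one,
    gaussianPairing_zero_right, mul_zero]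

theorem gaussianPairing_physHermite (ha : 0 < a) (hb : 0 < b) (hab : a⁻¹ - b⁻¹ = 1) (n m : ℕ) :
    gaussianPairing a b (physHermite n) (physHermite m)
      = if n = m then ((π / √(a * b) * (2 * (a⁻¹ + b⁻¹)) ^ n * n.factorial : ℝ) : ℂ) else 0 := by
  induction n generalizing m with
  | zero =>
    cases m with
    | zero => simp [physHermite, gaussianPairing_one_one ha hb]
    | succ m =>
      rw [← star_gaussianPairing, gaussianPairing_physHermite_succ_zero ha hb hab]
      simp
  | succ n ih =>
    cases m with
    | zero => rw [gaussianPairing_physHermite_succ_zero ha hb hab, if_neg n.succ_ne_zero]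
    | succ m =>
      rw [gaussianPairing_physHermite_succ_left ha hb hab, derivative_physHermite_succ,
        gaussianPairing_smul_right, ih]
      obtain rfl | hnm := eq_or_ne n m
      · rw [if_pos rfl, if_pos rfl, Complex.real_smul, Nat.factorial_succ, pow_succ]
        push_cast
        ring
      · simp [hnm]

lemma one_div_sub_one_pos {s : ℝ} (hs0 : 0 < s) (hs1 : s < 1) : 0 < 1 / s - 1 :=
  sub_pos.2 ((one_lt_div hs0).2 hs1)

lemma gaussianPairing_physHermite_eq_bn {s : ℝ} (hs0 : 0 < s) (hs1 : s < 1) (n m : ℕ) :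
    gaussianPairing (1 - s) (1 / s - 1) (physHermite n) (physHermite m)
      = if n = m then (bn s n : ℂ) else 0 := by
  have ha : 0 < 1 - s := sub_pos.2 hs1
  have hb_eq : 1 / s - 1 = (1 - s) / s := by rw [sub_div, div_self hs0.ne']
  have hb : 0 < 1 / s - 1 := one_div_sub_one_pos hs0 hs1
  have hdiff : (1 - s)⁻¹ - (1 / s - 1)⁻¹ = 1 := by rw [hb_eq]; field_simp
  have hsum : 2 * ((1 - s)⁻¹ + (1 / s - 1)⁻¹) = 2 * (1 + s) / (1 - s) := by
    rw [hb_eq]; field_simp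
  have hnorm : π / √((1 - s) * (1 / s - 1)) = π * √s / (1 - s) := by
    rw [hb_eq, ← mul_div_assoc, sqrt_div' _ hs0.le, sqrt_mul_self ha.le, div_div_eq_mul_div]
  rw [gaussianPairing_physHermite ha hb hdiff, hsum, hnorm, bn]

lemma map_gaussianIntegrand {A : Type*} [Ring A] [Algebra ℝ A] [Star A] (φ : ℂ →⋆ₐ[ℝ] A)
    (f g : ℝ[X]) (z : ℂ) :
    φ (gaussianIntegrand a b f g z)
      = gaussianWeight a b z • (aeval (φ z) f * star (aeval (φ z) g)) := by
  rw [gaussianIntegrand, map_smul, map_mul, map_star, aeval_algHom_apply, aeval_algHom_apply]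

theorem quaternionicHermite_Hn_orthogonal_general {A : Type*} [NormedRing A] [NormedAlgebra ℝ A]
    [CompleteSpace A] [Star A] (φ : ℂ →⋆ₐ[ℝ] A) {s : ℝ} (hs0 : 0 < s) (hs1 : s < 1) (n m : ℕ) :
    ∫ x : ℝ, ∫ y : ℝ, exp (-(1 - s) * x ^ 2 - (1 / s - 1) * y ^ 2) •
        (aeval (φ (x + y * Complex.I)) (physHermite n) *
          star (aeval (φ (x + y * Complex.I)) (physHermite m)))
      = if n = m then bn s n • (1 : A) else 0 := by
  have hint := integrable_gaussianIntegrand (sub_pos.2 hs1) (one_div_sub_one_pos hs0 hs1)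
    (physHermite n) (physHermite m)
  let Φ : ℂ →L[ℝ] A := φ.toAlgHom.toLinearMap.toContinuousLinearMap
  calc
    _ = ∫ x : ℝ, ∫ y : ℝ, Φ (gaussianIntegrand (1 - s) (1 / s - 1) (physHermite n) (physHermite m)
          (x + y * Complex.I)) := by
      congr! with x y
      refine .trans ?_ (map_gaussianIntegrand φ _ _ _).symm
      simp [gaussianWeight]
    _ = Φ (gaussianPairing (1 - s) (1 / s - 1) (physHermite n) (physHermite m)) := by
      rw [← integral_complex_eq_integral_integral (Φ.integrable_comp hint),
        Φ.integral_comp_comm hint, gaussianPairing]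
    _ = if n = m then bn s n • (1 : A) else 0 := by
      rw [gaussianPairing_physHermite_eq_bn hs0 hs1, apply_ite Φ, map_zero]
      congr 1
      exact (φ.toAlgHom.commutes (bn s n)).trans (Algebra.algebraMap_eq_smul_one _)

end Hermite

section Slice

variable (u : specialUnitaryGroup (Fin 2) ℂ)

lemma repMat_mul (z w : ℂ) : repMat z u * repMat w u = repMat (z * w) u := by
  have hu : star (u : Matrix (Fin 2) (Fin 2) ℂ) * u = 1 :=
    mem_unitaryGroup_iff'.1 (mem_specialUnitaryGroup_iff.1 u.2).1
  have hdiag : diagonal ![z * w, (starRingEnd ℂ) (z * w)]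
      = diagonal ![z, (starRingEnd ℂ) z] * diagonal ![w, (starRingEnd ℂ) w] := by
    rw [diagonal_mul_diagonal]
    congr 1 with i
    fin_cases i <;> simp
  simp only [repMat, hdiag, mul_assoc]
  rw [← mul_assoc (star (u : Matrix (Fin 2) (Fin 2) ℂ)) _ (_ * _), hu, one_mul]

lemma repMat_add_mul_I (x y : ℝ) :
    repMat (x + y * Complex.I) u = x • 1 + y • repMat Complex.I u := by
  have hu : (u : Matrix (Fin 2) (Fin 2) ℂ) * star (u : Matrix (Fin 2) (Fin 2) ℂ) = 1 :=
    mem_unitaryGroup_iff.1 (mem_specialUnitaryGroup_iff.1 u.2).1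
  have hdiag : diagonal ![x + y * Complex.I, (starRingEnd ℂ) (x + y * Complex.I)]
      = x • (1 : Matrix (Fin 2) (Fin 2) ℂ)
        + y • diagonal ![Complex.I, (starRingEnd ℂ) Complex.I] := by
    ext i j
    fin_cases i <;> fin_cases j <;> simp
  simp only [repMat, hdiag, mul_add, add_mul, mul_smul_comm, smul_mul_assoc, mul_one, hu]

lemma star_repMat (z : ℂ) : star (repMat z u) = repMat (star z) u := by
  have hdiag : star (diagonal ![z, (starRingEnd ℂ) z]) =
      diagonal ![star z, (starRingEnd ℂ) (star z)] := by
    rw [star_eq_conjTranspose, diagonal_conjTranspose]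
    congr 1 with i
    fin_cases i <;> simp
  simp only [repMat, star_mul, star_star, mul_assoc, hdiag]

lemma star_repMat_I : star (repMat Complex.I u) = -repMat Complex.I u := by
  have := repMat_add_mul_I u 0 (-1)
  simpa [star_repMat] using this

lemma repMat_I_mul_self : repMat Complex.I u * repMat Complex.I u = -1 := by
  have := repMat_add_mul_I u (-1) 0
  simpa [repMat_mul] using this

lemma quatOf_add_mul_I (x y : ℝ) :
    quatOf (x + y * Complex.I) u = x • 1 + y • quatOf Complex.I u := by
  ext <;> simp only [re_add, re_smul, re_one, imI_add, imI_smul, imI_one, imJ_add, imJ_smul,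
    imJ_one, imK_add, imK_smul, imK_one] <;> simp [quatOf, repMat_add_mul_I]

lemma re_quatOf_I : (quatOf Complex.I u).re = 0 := by
  have h := congrArg Complex.re (congrFun₂ (star_repMat_I u) 0 0)
  simp only [Matrix.star_apply, Matrix.neg_apply, Complex.star_def, Complex.conj_re,
    Complex.neg_re] at h
  exact self_eq_neg.1 h

lemma normSq_quatOf_I : normSq (quatOf Complex.I u) = 1 := by
  have h : star (repMat Complex.I u) * repMat Complex.I u = 1 := by
    rw [star_repMat_I, neg_mul, repMat_I_mul_self, neg_neg]
  have h₀₀ := congrArg Complex.re (congrFun₂ h 0 0)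
  simp only [mul_apply, Fin.sum_univ_two, Matrix.star_apply] at h₀₀
  simp only [Complex.star_def, Complex.add_re, Complex.mul_re, Complex.conj_re, Complex.conj_im,
    neg_mul, sub_neg_eq_add, one_apply_eq, Complex.one_re] at h₀₀
  rw [normSq_def', quatOf]
  linarith

lemma quatOf_I_mul_self : quatOf Complex.I u * quatOf Complex.I u = -1 := by
  rw [← sq, sq_eq_neg_normSq.2 (re_quatOf_I u), normSq_quatOf_I, Quaternion.coe_one]

/-- The slice `ℝ + ℝJ ⊆ ℍ` determined by `u`, where `J = quatOf I u` satisfies `J² = -1` and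
`star J = -J`, parametrized by the star-algebra embedding of `ℂ` that sends `I` to `J`. -/
noncomputable def sliceHom : ℂ →⋆ₐ[ℝ] ℍ[ℝ] where
  __ := Complex.liftAux (quatOf Complex.I u) (quatOf_I_mul_self u)
  map_star' z := by
    have hstar : star (quatOf Complex.I u) = -quatOf Complex.I u :=
      star_eq_neg.2 (re_quatOf_I u)
    simp [hstar]

lemma sliceHom_apply (z : ℂ) : sliceHom u z = quatOf z u := by
  conv_rhs => rw [← Complex.re_add_im z, quatOf_add_mul_I, ← Algebra.algebraMap_eq_smul_one]
  rfl

end Slice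

theorem quaternionicHermite_Hn_orthogonal
    (ω : Measure (Matrix.specialUnitaryGroup (Fin 2) ℂ))
    [IsProbabilityMeasure ω] [ω.IsMulLeftInvariant]
    (s : ℝ) (hs0 : 0 < s) (hs1 : s < 1) (n m : ℕ) :
    (∫ u, (∫ x : ℝ, ∫ y : ℝ,
        Real.exp (-(1 - s) * x ^ 2 - (1 / s - 1) * y ^ 2) •
          (Polynomial.aeval (quatOf ((x : ℂ) + y * Complex.I) u) (physHermite n) *
            star (Polynomial.aeval (quatOf ((x : ℂ) + y * Complex.I) u) (physHermite m)))) ∂ω)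
      = if n = m then bn s n • (1 : ℍ[ℝ]) else 0 := by
  simp_rw [← sliceHom_apply, quaternionicHermite_Hn_orthogonal_general _ hs0 hs1, integral_const,
    probReal_univ, one_smul]
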